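/- arXiv:1210.3397 — 2 statements merged into one kernel-verified Lean document; each statement's English description precedes it below -/
import Mathlib

section
/- Let f0 = sup_{k≥0} 2^{k−2^k} χ_{[0,2^{2^k})} and a(t,f0) = (1/log(1+t)) ∫_0^t f0(s) ds. There exists a function r : (2,∞) → ℝ with r(t) → 0 as t → ∞ such that for every integer n ≥ 1 and every t with 2^{2^n} ≤ t < 2^{2^{n+1}}, one has a(t,f0) = 2^{n+1}/log t + t·f0(t)/log(1+t) + r(t). -/
open MeasureTheory Filter Set

/-- `f0 = sup_{k ≥ 0} 2^(k - 2^k) χ_[0, 2^(2^k))`. -/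
noncomputable def f0 : ℝ → ℝ := fun t =>
  ⨆ k : ℕ, if t < (2:ℝ) ^ (2 ^ k) then (2:ℝ) ^ ((k : ℤ) - 2 ^ k) else 0

/-!
On `[2^(2^n), 2^(2^(n+1)))` the function `f0` is constant, equal to `2^(n+1) / 2^(2^(n+1))`, so
this interval contributes `2^(n+1) - 2^(n+1) / 2^(2^n)` to the integral of `f0`. The first terms
telescope and the second ones are summable; hence `∫ s in 0..t, f0 s = 2^(n+1) + t * f0 t + O(1)`
for `t` in this interval. After division by `log (1 + t)` the bounded term vanishes in the limit,
and since `2^(n+1) ≤ t`, replacing `2^(n+1) / log (1 + t)` by `2^(n+1) / log t` costs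
`O(1 / log t)`.
-/

section IndicatorSup

variable {ι α β : Type*} [LinearOrder α] [ConditionallyCompleteLattice β] [Zero β]
  {b : ι → α} {c : ι → β}

lemma iSup_ite_lt_eq [LinearOrder ι] (hc : Antitone c) {n : ι} (hn : 0 ≤ c n) {t : α}
    (ht : t < b n) (hmin : ∀ k < n, b k ≤ t) : (⨆ k, if t < b k then c k else 0) = c n := by
  refine IsGreatest.csSup_eq ⟨⟨n, if_pos ht⟩, ?_⟩
  rintro _ ⟨k, rfl⟩
  dsimp only
  split_ifs with hk
  · exact hc (not_lt.1 fun hkn => (hmin k hkn).not_gt hk)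
  · exact hn

lemma antitone_iSup_ite_lt (hc : ∀ k, 0 ≤ c k) (hbdd : BddAbove (range c)) :
    Antitone fun t => ⨆ k, if t < b k then c k else 0 := by
  intro s t hst
  have hbdd_s : BddAbove (range fun k => if s < b k then c k else 0) := by
    refine hbdd.range_mono _ fun k => ?_
    split_ifs
    exacts [le_rfl, hc k]
  refine ciSup_mono hbdd_s fun k => ?_
  split_ifs with ht hs
  · exact le_rfl
  · exact absurd (hst.trans_lt ht) hs
  · exact hc k
  · exact le_rfl

end IndicatorSup

section Log

lemma mul_log_one_add_sub_log_le_one {t : ℝ} (ht : 0 < t) :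
    t * (Real.log (1 + t) - Real.log t) ≤ 1 := by
  have hlog : Real.log ((1 + t) / t) ≤ (1 + t) / t - 1 := Real.log_le_sub_one_of_pos (by positivity)
  calc t * (Real.log (1 + t) - Real.log t)
      = t * Real.log ((1 + t) / t) := by rw [Real.log_div (by positivity) ht.ne']
    _ ≤ t * ((1 + t) / t - 1) := by gcongr
    _ = 1 := by field_simp; ring

lemma abs_div_log_one_add_sub_div_log_le {t x : ℝ} (ht : 2 ≤ t) (hx : |x| ≤ t) :
    |x / Real.log (1 + t) - x / Real.log t| ≤ 1 / Real.log t := by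
  have hlog : 0 < Real.log t := Real.log_pos (by linarith)
  have hlog_le : Real.log t ≤ Real.log (1 + t) := Real.log_le_log (by linarith) (by linarith)
  have one_le_log : 1 ≤ Real.log (1 + t) := by
    rw [Real.le_log_iff_exp_le (by linarith)]
    linarith [Real.exp_one_lt_three]
  calc |x / Real.log (1 + t) - x / Real.log t|
      = |x| * (Real.log (1 + t) - Real.log t) / (Real.log (1 + t) * Real.log t) := by
        rw [div_sub_div _ _ (by linarith) hlog.ne', mul_comm (Real.log (1 + t)) x, ← mul_sub,
          abs_div, abs_mul, abs_sub_comm, abs_of_nonneg (sub_nonneg.2 hlog_le),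
          abs_of_pos (by positivity : 0 < Real.log (1 + t) * Real.log t)]
    _ ≤ t * (Real.log (1 + t) - Real.log t) / (Real.log (1 + t) * Real.log t) := by
        have := sub_nonneg.2 hlog_le
        gcongr
    _ ≤ 1 / (1 * Real.log t) := by
        gcongr
        exact mul_log_one_add_sub_log_le_one (by linarith)
    _ = 1 / Real.log t := by rw [one_mul]

end Log

section DoubleLog

/-- The integer part of `log₂ (log₂ t)`, which for `t ≥ 2` is the index `n` of the interval
`[2^(2^n), 2^(2^(n+1)))` containing `t`. For `t < 2` it takes the junk value `0`. -/
noncomputable def floorLogLog (t : ℝ) : ℕ :=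
  Nat.log 2 (Nat.log 2 ⌊t⌋₊)

lemma le_floorLogLog_iff {t : ℝ} (ht : 2 ≤ t) {n : ℕ} :
    n ≤ floorLogLog t ↔ (2 : ℝ) ^ (2 ^ n) ≤ t := by
  have two_le_floor : 2 ≤ ⌊t⌋₊ := Nat.le_floor ht
  have hlog : Nat.log 2 ⌊t⌋₊ ≠ 0 := (Nat.log_pos one_lt_two two_le_floor).ne'
  rw [floorLogLog, Nat.le_log_iff_pow_le one_lt_two hlog,
    Nat.le_log_iff_pow_le one_lt_two (by lia), Nat.le_floor_iff (by linarith)]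
  norm_cast

lemma floorLogLog_eq_iff {t : ℝ} (ht : 2 ≤ t) {n : ℕ} :
    floorLogLog t = n ↔ t ∈ Ico ((2 : ℝ) ^ (2 ^ n)) (2 ^ (2 ^ (n + 1))) := by
  rw [mem_Ico, ← le_floorLogLog_iff ht, ← not_le, ← le_floorLogLog_iff ht]
  lia

lemma two_pow_two_pow_mono : Monotone fun n : ℕ => (2 : ℝ) ^ (2 ^ n) :=
  (pow_right_mono₀ one_le_two).comp (pow_right_mono₀ one_le_two)

lemma two_le_two_pow_two_pow (n : ℕ) : (2 : ℝ) ≤ 2 ^ (2 ^ n) :=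
  le_self_pow₀ one_le_two (by positivity)

lemma two_pow_succ_le_two_pow_two_pow (n : ℕ) : (2 : ℝ) ^ (n + 1) ≤ 2 ^ (2 ^ n) :=
  pow_le_pow_right₀ one_le_two Nat.lt_two_pow_self

lemma two_pow_succ_div_two_pow_two_pow_le (k : ℕ) :
    (2 : ℝ) ^ (k + 1) / 2 ^ (2 ^ k) ≤ 2 * (1 / 2) ^ k :=
  calc (2 : ℝ) ^ (k + 1) / 2 ^ (2 ^ k) ≤ 2 ^ (k + 1) / 2 ^ (2 * k) := by
        gcongr
        exacts [one_le_two, Nat.mul_le_pow (by decide) k]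
    _ = 2 * (1 / 2) ^ k := by
        rw [two_mul, pow_add _ k k, pow_succ, one_div, inv_pow]
        field_simp

lemma sum_two_pow_succ_div_two_pow_two_pow_le (n : ℕ) :
    ∑ k ∈ Finset.range n, (2 : ℝ) ^ (k + 1) / 2 ^ (2 ^ k) ≤ 4 :=
  calc ∑ k ∈ Finset.range n, (2 : ℝ) ^ (k + 1) / 2 ^ (2 ^ k)
      ≤ ∑ k ∈ Finset.range n, 2 * (1 / 2 : ℝ) ^ k :=
        Finset.sum_le_sum fun k _ => two_pow_succ_div_two_pow_two_pow_le k
    _ = 2 * ∑ k ∈ Finset.range n, (1 / 2 : ℝ) ^ k := (Finset.mul_sum ..).symm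
    _ ≤ 4 := by linarith [sum_geometric_two_le n]

end DoubleLog

section Plateaus

lemma antitone_two_zpow_sub_two_pow : Antitone fun k : ℕ => (2 : ℝ) ^ ((k : ℤ) - 2 ^ k) := by
  refine antitone_nat_of_succ_le fun k => zpow_le_zpow_right₀ one_le_two ?_
  have : (1 : ℤ) ≤ 2 ^ k := one_le_pow₀ one_le_two
  push_cast
  linarith [pow_succ (2 : ℤ) k]

lemma two_zpow_sub_two_pow (k : ℕ) : (2 : ℝ) ^ ((k : ℤ) - 2 ^ k) = 2 ^ k / 2 ^ (2 ^ k) := by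
  rw [zpow_sub₀ two_ne_zero]
  norm_cast

lemma f0_eq_of_lt_of_forall_le {n : ℕ} {t : ℝ} (ht : t < 2 ^ (2 ^ n))
    (hmin : ∀ k < n, (2 : ℝ) ^ (2 ^ k) ≤ t) : f0 t = 2 ^ n / 2 ^ (2 ^ n) :=
  (iSup_ite_lt_eq (b := fun k : ℕ => (2 : ℝ) ^ (2 ^ k)) antitone_two_zpow_sub_two_pow
    (by positivity) ht hmin).trans (two_zpow_sub_two_pow n)

lemma f0_of_lt_two {t : ℝ} (ht : t < 2) : f0 t = 1 / 2 := by
  simpa using f0_eq_of_lt_of_forall_le (n := 0) (by simpa using ht) (by simp)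

lemma f0_of_mem_Ico {n : ℕ} {t : ℝ} (ht : t ∈ Ico ((2 : ℝ) ^ (2 ^ n)) (2 ^ (2 ^ (n + 1)))) :
    f0 t = 2 ^ (n + 1) / 2 ^ (2 ^ (n + 1)) :=
  f0_eq_of_lt_of_forall_le ht.2 fun _ hk =>
    (two_pow_two_pow_mono (Nat.lt_succ_iff.1 hk)).trans ht.1

lemma antitone_f0 : Antitone f0 :=
  antitone_iSup_ite_lt (fun k => by positivity)
    ⟨_, forall_mem_range.2 fun k => antitone_two_zpow_sub_two_pow (Nat.zero_le k)⟩

end Plateaus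

section Integral

lemma integral_f0_zero_two : ∫ s in (0 : ℝ)..2, f0 s = 1 := by
  rw [intervalIntegral.integral_congr_Ioo_of_le (g := fun _ => 1 / 2) zero_le_two
    fun s hs => f0_of_lt_two hs.2]
  norm_num

lemma integral_f0_of_mem_Icc {n : ℕ} {t : ℝ}
    (ht : t ∈ Icc ((2 : ℝ) ^ (2 ^ n)) (2 ^ (2 ^ (n + 1)))) :
    ∫ s in (2 : ℝ) ^ (2 ^ n)..t, f0 s
      = t * (2 ^ (n + 1) / 2 ^ (2 ^ (n + 1))) - 2 ^ (n + 1) / 2 ^ (2 ^ n) := by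
  rw [intervalIntegral.integral_congr_Ioo_of_le ht.1
    fun s hs => f0_of_mem_Ico ⟨hs.1.le, hs.2.trans_le ht.2⟩, intervalIntegral.integral_const,
    smul_eq_mul, show (2 : ℝ) ^ (2 ^ (n + 1)) = (2 ^ (2 ^ n)) ^ 2 by rw [← pow_mul, ← pow_succ]]
  field_simp

lemma integral_f0_add_integral_f0 (a b c : ℝ) :
    (∫ s in a..b, f0 s) + ∫ s in b..c, f0 s = ∫ s in a..c, f0 s :=
  intervalIntegral.integral_add_adjacent_intervals antitone_f0.intervalIntegrable
    antitone_f0.intervalIntegrable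

lemma integral_f0_two_pow_two_pow (n : ℕ) :
    ∫ s in (0 : ℝ)..2 ^ (2 ^ n), f0 s
      = 2 ^ (n + 1) - 1 - ∑ k ∈ Finset.range n, (2 : ℝ) ^ (k + 1) / 2 ^ (2 ^ k) := by
  induction n with
  | zero =>
    simp only [pow_zero, pow_one, integral_f0_zero_two, Finset.range_zero, Finset.sum_empty]
    norm_num
  | succ n ih =>
    rw [← integral_f0_add_integral_f0 0 (2 ^ (2 ^ n)), ih,
      integral_f0_of_mem_Icc (right_mem_Icc.2 (two_pow_two_pow_mono n.le_succ)),
      mul_div_cancel₀ _ (by positivity), Finset.sum_range_succ]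
    ring

variable {n : ℕ} {t : ℝ}

lemma integral_f0_eq (ht : t ∈ Ico ((2 : ℝ) ^ (2 ^ n)) (2 ^ (2 ^ (n + 1)))) :
    ∫ s in (0 : ℝ)..t, f0 s = 2 ^ (n + 1) + t * f0 t
      - (1 + ∑ k ∈ Finset.range (n + 1), (2 : ℝ) ^ (k + 1) / 2 ^ (2 ^ k)) := by
  rw [← integral_f0_add_integral_f0 0 (2 ^ (2 ^ n)), integral_f0_two_pow_two_pow,
    integral_f0_of_mem_Icc (Ico_subset_Icc_self ht), f0_of_mem_Ico ht, Finset.sum_range_succ]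
  ring

lemma abs_integral_f0_sub_le (ht : t ∈ Ico ((2 : ℝ) ^ (2 ^ n)) (2 ^ (2 ^ (n + 1)))) :
    |(∫ s in (0 : ℝ)..t, f0 s) - 2 ^ (n + 1) - t * f0 t| ≤ 5 := by
  have sum_nonneg : 0 ≤ ∑ k ∈ Finset.range (n + 1), (2 : ℝ) ^ (k + 1) / 2 ^ (2 ^ k) := by positivity
  have sum_le := sum_two_pow_succ_div_two_pow_two_pow_le (n + 1)
  rw [integral_f0_eq ht, abs_le]
  constructor <;> linarith

lemma abs_average_f0_sub_le (ht : t ∈ Ico ((2 : ℝ) ^ (2 ^ n)) (2 ^ (2 ^ (n + 1)))) :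
    |(∫ s in (0 : ℝ)..t, f0 s) / Real.log (1 + t) - 2 ^ (n + 1) / Real.log t
      - t * f0 t / Real.log (1 + t)| ≤ 6 / Real.log t := by
  have two_le : 2 ≤ t := (two_le_two_pow_two_pow n).trans ht.1
  have hlog : 0 < Real.log t := Real.log_pos (by linarith)
  have hlog_le : Real.log t ≤ Real.log (1 + t) := Real.log_le_log (by linarith) (by linarith)
  have integral_error :
      |((∫ s in (0 : ℝ)..t, f0 s) - 2 ^ (n + 1) - t * f0 t) / Real.log (1 + t)|
        ≤ 5 / Real.log t := by
    rw [abs_div, abs_of_pos (hlog.trans_le hlog_le)]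
    gcongr
    exact abs_integral_f0_sub_le ht
  have log_error : |(2 : ℝ) ^ (n + 1) / Real.log (1 + t) - 2 ^ (n + 1) / Real.log t|
      ≤ 1 / Real.log t := by
    refine abs_div_log_one_add_sub_div_log_le two_le ?_
    rw [abs_of_pos (by positivity)]
    exact (two_pow_succ_le_two_pow_two_pow n).trans ht.1
  calc _ = |((∫ s in (0 : ℝ)..t, f0 s) - 2 ^ (n + 1) - t * f0 t) / Real.log (1 + t)
          + (2 ^ (n + 1) / Real.log (1 + t) - 2 ^ (n + 1) / Real.log t)| := by ring_nf
    _ ≤ 5 / Real.log t + 1 / Real.log t :=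
        (abs_add_le _ _).trans (add_le_add integral_error log_error)
    _ = 6 / Real.log t := by ring

end Integral

/-- There is `r(t) → 0` such that for all `n ≥ 1` and `2^(2^n) ≤ t < 2^(2^(n+1))`,
`a(t, f0) = 2^(n+1)/log t + t f0(t)/log(1+t) + r(t)`. -/
theorem avA_f0_asymptotics :
    ∃ r : ℝ → ℝ, Filter.Tendsto r Filter.atTop (nhds 0) ∧
      ∀ n : ℕ, 1 ≤ n → ∀ t : ℝ, (2:ℝ) ^ (2 ^ n) ≤ t → t < (2:ℝ) ^ (2 ^ (n + 1)) →
        (∫ s in (0:ℝ)..t, f0 s) / Real.log (1 + t)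
          = 2 ^ (n + 1) / Real.log t + t * f0 t / Real.log (1 + t) + r t := by
  refine ⟨fun t => (∫ s in (0:ℝ)..t, f0 s) / Real.log (1 + t)
    - 2 ^ (floorLogLog t + 1) / Real.log t - t * f0 t / Real.log (1 + t), ?_, ?_⟩
  · refine squeeze_zero_norm' ?_ (Real.tendsto_log_atTop.const_div_atTop 6)
    filter_upwards [eventually_ge_atTop 2] with t ht
    exact abs_average_f0_sub_le ((floorLogLog_eq_iff ht).1 rfl)
  · intro n _ t hlo hhi
    have two_le : 2 ≤ t := (two_le_two_pow_two_pow n).trans hlo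
    simp only [(floorLogLog_eq_iff two_le).2 ⟨hlo, hhi⟩]
    ring
end

section
/- Define x : [1,∞) → ℝ by x(t) = 2^{n−√(log₂ t)} for t ∈ [2^{n²}, 2^{(n+1)²}) with n ≥ 0 an integer (so x(t) = 2^{n−√(log₂ t)} whenever n ≤ √(log₂ t) < n+1). Then lim_{t→∞} (Mx)(t) = 1/(2·log 2), where (Mx)(t) = (1/log t) ∫_1^t x(s) ds/s for t > 1. -/
open MeasureTheory Filter Set

/-- The logarithmic Cesàro mean `(Mg)(t) = (1/log t) ∫_1^t g(s) ds/s`. -/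
noncomputable def Mop (g : ℝ → ℝ) (t : ℝ) : ℝ := (∫ s in (1:ℝ)..t, g s / s) / Real.log t

/-- `x(t) = 2^(n - √(log₂ t))` for `t ∈ [2^(n²), 2^((n+1)²))`, i.e.
`x(t) = 2^(⌊√(log₂ t)⌋ - √(log₂ t))` for `t ≥ 1`. -/
noncomputable def x1 : ℝ → ℝ := fun t =>
  if 1 ≤ t then
    (2:ℝ) ^ ((Nat.floor (Real.sqrt (Real.logb 2 t)) : ℝ) - Real.sqrt (Real.logb 2 t))
  else 0

/-!
Substituting `s = b ^ u²` turns the logarithmic mean of `s ↦ f (√(log_b s))` up to `b ^ U²` into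
`(2 / U²) ∫_0^U u f(u) du`, and `x(s) = 2 ^ (-{√(log₂ s)})` has this form with the `1`-periodic
function `f(u) = 2 ^ (-{u})`. If `f` is periodic with mean `m`, the primitive of `f - m` is
continuous and periodic, hence bounded, so integration by parts gives
`∫_0^U u (f(u) - m) du = O(U)`: the logarithmic mean tends to `m`. Here
`m = ∫_0^1 2 ^ (-u) du = 1 / (2 log 2)`.
-/

section WeightedMean

variable {f : ℝ → ℝ} {T : ℝ}

lemma integral_id_mul_eq_sub_integral_primitive {a b : ℝ} (hf : IntervalIntegrable f volume a b) :
    ∫ u in a..b, u * f u = b * (∫ u in a..b, f u) - ∫ u in a..b, ∫ v in a..u, f v := by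
  have primitive_ac : AbsolutelyContinuousOnInterval (fun u => ∫ v in a..u, f v) a b :=
    hf.absolutelyContinuousOnInterval_intervalIntegral left_mem_uIcc
  have id_ac : AbsolutelyContinuousOnInterval (fun u : ℝ => u) a b :=
    LipschitzWith.id.lipschitzOnWith.absolutelyContinuousOnInterval
  have deriv_primitive :
      ∀ᵐ u, u ∈ uIoc a b → u * f u = u * deriv (fun u => ∫ v in a..u, f v) u := by
    filter_upwards [hf.ae_hasDerivAt_integral] with u hu hmem
    rw [(hu (uIoc_subset_uIcc hmem) a left_mem_uIcc).deriv]
  rw [intervalIntegral.integral_congr_ae deriv_primitive,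
    id_ac.integral_mul_deriv_eq_deriv_mul primitive_ac]
  simp

lemma abs_integral_id_mul_le_of_abs_primitive_le {C U : ℝ} (hU : 0 ≤ U)
    (hf : IntervalIntegrable f volume 0 U) (hC : ∀ u ∈ Icc 0 U, |∫ v in 0..u, f v| ≤ C) :
    |∫ u in 0..U, u * f u| ≤ 2 * C * U := by
  have boundary_term : |U * ∫ u in 0..U, f u| ≤ C * U := by
    rw [abs_mul, abs_of_nonneg hU, mul_comm]
    gcongr
    exact hC U (right_mem_Icc.2 hU)
  have primitive_term : |∫ u in 0..U, ∫ v in 0..u, f v| ≤ C * U := by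
    have hbound : ∀ u ∈ uIoc 0 U, ‖∫ v in 0..u, f v‖ ≤ C := fun u hu =>
      hC u (Ioc_subset_Icc_self (uIoc_of_le hU ▸ hu))
    simpa only [Real.norm_eq_abs, sub_zero, abs_of_nonneg hU] using
      intervalIntegral.norm_integral_le_of_norm_le_const hbound
  calc |∫ u in 0..U, u * f u|
      = |U * (∫ u in 0..U, f u) - ∫ u in 0..U, ∫ v in 0..u, f v| := by
        rw [integral_id_mul_eq_sub_integral_primitive hf]
    _ ≤ |U * ∫ u in 0..U, f u| + |∫ u in 0..U, ∫ v in 0..u, f v| := abs_sub _ _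
    _ ≤ 2 * C * U := by linarith

lemma exists_abs_primitive_le_of_periodic (hper : Function.Periodic f T) (hT : T ≠ 0)
    (hf : IntervalIntegrable f volume 0 T) (hmean : ∫ u in 0..T, f u = 0) :
    ∃ C, ∀ u, |∫ v in 0..u, f v| ≤ C := by
  have hint := hper.intervalIntegrable₀ hT hf
  have primitive_periodic : Function.Periodic (fun u => ∫ v in 0..u, f v) T := fun u => by
    simpa [hmean] using hper.intervalIntegral_add_eq_add 0 u hint
  have primitive_bounded := primitive_periodic.isBounded_of_continuous hT
    (intervalIntegral.continuous_primitive hint 0)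
  obtain ⟨C, hC⟩ := primitive_bounded.exists_norm_le
  exact ⟨C, fun u => hC _ (mem_range_self u)⟩

lemma tendsto_two_div_sq_mul_integral_id_mul_of_periodic_of_integral_eq_zero
    (hper : Function.Periodic f T) (hT : T ≠ 0) (hf : IntervalIntegrable f volume 0 T)
    (hmean : ∫ u in 0..T, f u = 0) :
    Tendsto (fun U => 2 / U ^ 2 * ∫ u in 0..U, u * f u) atTop (nhds 0) := by
  obtain ⟨C, hC⟩ := exists_abs_primitive_le_of_periodic hper hT hf hmean
  have decay : Tendsto (fun U : ℝ => 4 * C / U) atTop (nhds 0) :=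
    tendsto_const_nhds.div_atTop tendsto_id
  refine squeeze_zero_norm' ?_ decay
  filter_upwards [eventually_gt_atTop 0] with U hU
  calc ‖2 / U ^ 2 * ∫ u in 0..U, u * f u‖
      = 2 / U ^ 2 * |∫ u in 0..U, u * f u| := by
        rw [norm_mul, Real.norm_of_nonneg (by positivity), Real.norm_eq_abs]
    _ ≤ 2 / U ^ 2 * (2 * C * U) := by
        gcongr
        exact abs_integral_id_mul_le_of_abs_primitive_le hU.le
          (hper.intervalIntegrable₀ hT hf 0 U) fun u _ => hC u
    _ = 4 * C / U := by field_simp; ring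

lemma tendsto_two_div_sq_mul_integral_id_mul_of_periodic (hper : Function.Periodic f T)
    (hT : T ≠ 0) (hf : IntervalIntegrable f volume 0 T) :
    Tendsto (fun U => 2 / U ^ 2 * ∫ u in 0..U, u * f u) atTop
      (nhds (T⁻¹ * ∫ u in 0..T, f u)) := by
  set m := T⁻¹ * ∫ u in 0..T, f u with hm
  have centered_periodic : Function.Periodic (fun u => f u - m) T := fun u => by simp only [hper u]
  have centered_mean : ∫ u in 0..T, (f u - m) = 0 := by
    rw [intervalIntegral.integral_sub hf intervalIntegrable_const,
      intervalIntegral.integral_const, hm, sub_zero, smul_eq_mul, mul_inv_cancel_left₀ hT, sub_self]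
  have centered_lim :=
    (tendsto_two_div_sq_mul_integral_id_mul_of_periodic_of_integral_eq_zero centered_periodic hT
      (hf.sub intervalIntegrable_const) centered_mean).add_const m
  rw [zero_add] at centered_lim
  refine centered_lim.congr' ?_
  filter_upwards [eventually_gt_atTop 0] with U hU
  have split : ∫ u in 0..U, u * (f u - m) = (∫ u in 0..U, u * f u) - U ^ 2 / 2 * m := by
    have weighted_integrable : IntervalIntegrable (fun u => u * f u) volume 0 U :=
      (hper.intervalIntegrable₀ hT hf 0 U).continuousOn_mul continuousOn_id
    have linear_integrable : IntervalIntegrable (fun u => u * m) volume 0 U :=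
      (continuous_mul_const m).intervalIntegrable 0 U
    simp only [mul_sub]
    rw [intervalIntegral.integral_sub weighted_integrable linear_integrable,
      intervalIntegral.integral_mul_const, integral_id]
    ring
  rw [split]
  field_simp
  ring

end WeightedMean

section LogarithmicMean

variable {f g : ℝ → ℝ} {b t : ℝ}

lemma sqrt_logb_rpow_sq {u : ℝ} (hb : 0 < b) (hb1 : b ≠ 1) (hu : 0 ≤ u) :
    √(Real.logb b (b ^ u ^ 2)) = u := by
  rw [Real.logb_rpow hb hb1, Real.sqrt_sq hu]

lemma rpow_sqrt_logb_sq (hb : 1 < b) (ht : 1 ≤ t) : b ^ √(Real.logb b t) ^ 2 = t := by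
  rw [Real.sq_sqrt (Real.logb_nonneg hb ht),
    Real.rpow_logb (by positivity) hb.ne' (by positivity)]

lemma integral_comp_sqrt_logb_div (f : ℝ → ℝ) {U : ℝ} (hb : 1 < b) (hU : 0 ≤ U) :
    ∫ s in 1..b ^ U ^ 2, f √(Real.logb b s) / s = 2 * Real.log b * ∫ u in 0..U, u * f u := by
  have hlog : 0 < Real.log b := Real.log_pos hb
  have hderiv (u : ℝ) :
      HasDerivAt (fun u => b ^ u ^ 2) (2 * Real.log b * u * b ^ u ^ 2) u := by
    convert! (hasDerivAt_pow 2 u).const_rpow (by positivity : 0 < b) using 1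
    push_cast
    ring
  have hderiv_nonneg : ∀ u ∈ Ioo (min 0 U) (max 0 U), 0 ≤ 2 * Real.log b * u * b ^ u ^ 2 := by
    intro u hu
    have : 0 ≤ u := (min_eq_left hU ▸ hu.1).le
    positivity
  calc ∫ s in 1..b ^ U ^ 2, f √(Real.logb b s) / s
      = ∫ s in b ^ (0 : ℝ) ^ 2..b ^ U ^ 2, f √(Real.logb b s) / s := by
        rw [zero_pow two_ne_zero, Real.rpow_zero]
    _ = ∫ u in 0..U, (2 * Real.log b * u * b ^ u ^ 2) •
          ((fun s => f √(Real.logb b s) / s) ∘ fun u => b ^ u ^ 2) u :=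
        (intervalIntegral.integral_deriv_smul_comp_of_deriv_nonneg
          (fun u _ => (hderiv u).continuousAt.continuousWithinAt) (fun u _ => hderiv u)
          hderiv_nonneg).symm
    _ = ∫ u in 0..U, 2 * Real.log b * (u * f u) := by
        refine intervalIntegral.integral_congr fun u hu => ?_
        have hu : 0 ≤ u := (uIcc_of_le hU ▸ hu).1
        have : 0 < b ^ u ^ 2 := by positivity
        simp only [Function.comp_apply, smul_eq_mul,
          sqrt_logb_rpow_sq (zero_lt_one.trans hb) hb.ne' hu]
        field_simp
    _ = 2 * Real.log b * ∫ u in 0..U, u * f u := intervalIntegral.integral_const_mul _ _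

lemma Mop_comp_sqrt_logb (f : ℝ → ℝ) (hb : 1 < b) (ht : 1 ≤ t) :
    Mop (fun s => f √(Real.logb b s)) t =
      2 / √(Real.logb b t) ^ 2 * ∫ u in 0..√(Real.logb b t), u * f u := by
  have hlog : Real.log b ≠ 0 := (Real.log_pos hb).ne'
  have log_eq : Real.log t = √(Real.logb b t) ^ 2 * Real.log b := by
    rw [Real.sq_sqrt (Real.logb_nonneg hb ht), Real.logb, div_mul_cancel₀ _ hlog]
  have subst := integral_comp_sqrt_logb_div f hb (Real.sqrt_nonneg (Real.logb b t))
  rw [rpow_sqrt_logb_sq hb ht] at subst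
  rw [Mop, subst, log_eq]
  field_simp

lemma tendsto_Mop_comp_sqrt_logb_of_periodic {T : ℝ} (hb : 1 < b) (hper : Function.Periodic f T)
    (hT : T ≠ 0) (hf : IntervalIntegrable f volume 0 T) :
    Tendsto (Mop fun s => f √(Real.logb b s)) atTop (nhds (T⁻¹ * ∫ u in 0..T, f u)) := by
  have sqrt_logb_tendsto : Tendsto (fun t => √(Real.logb b t)) atTop atTop :=
    Real.tendsto_sqrt_atTop.comp (Real.tendsto_logb_atTop hb)
  refine ((tendsto_two_div_sq_mul_integral_id_mul_of_periodic hper hT hf).comp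
    sqrt_logb_tendsto).congr' ?_
  filter_upwards [eventually_ge_atTop 1] with t ht
  exact (Mop_comp_sqrt_logb f hb ht).symm

lemma Mop_congr (hfg : EqOn f g (Ici 1)) (ht : 1 ≤ t) : Mop f t = Mop g t := by
  rw [Mop, Mop, intervalIntegral.integral_congr fun s hs => ?_]
  have hs : 1 ≤ s := (uIcc_of_le ht ▸ hs).1
  simp only [hfg hs]

lemma tendsto_Mop_comp_fract_sqrt_logb (hb : 1 < b) (hf : IntervalIntegrable f volume 0 1) :
    Tendsto (Mop fun s => f (Int.fract √(Real.logb b s))) atTop (nhds (∫ u in 0..1, f u)) := by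
  have eqOn_period : EqOn f (fun u => f (Int.fract u)) (uIoo 0 1) := fun u hu => by
    simp only [Int.fract_eq_self.2 (Ioo_subset_Ico_self (uIoo_of_le (zero_le_one' ℝ) ▸ hu))]
  have hper : Function.Periodic (fun u => f (Int.fract u)) 1 := (Int.fract_periodic ℝ).comp f
  simpa only [inv_one, one_mul, ← intervalIntegral.integral_congr_uIoo eqOn_period] using
    tendsto_Mop_comp_sqrt_logb_of_periodic hb hper one_ne_zero (hf.congr_uIoo eqOn_period)

end LogarithmicMean

lemma integral_const_rpow_neg {b : ℝ} (hb : 0 < b) (hb1 : b ≠ 1) (c d : ℝ) :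
    ∫ u in c..d, b ^ (-u) = (b ^ (-c) - b ^ (-d)) / Real.log b := by
  have hlog : Real.log b ≠ 0 := Real.log_ne_zero_of_pos_of_ne_one hb hb1
  have hderiv (u : ℝ) : HasDerivAt (fun u => -b ^ (-u) / Real.log b) (b ^ (-u)) u := by
    convert! ((hasDerivAt_neg u).const_rpow hb).neg.div_const (Real.log b) using 1
    field_simp
  rw [intervalIntegral.integral_eq_sub_of_hasDerivAt (fun u _ => hderiv u)
    (((Real.continuous_const_rpow hb.ne').comp continuous_neg).intervalIntegrable c d)]
  ring

lemma x1_eq_rpow_neg_fract {t : ℝ} (ht : 1 ≤ t) :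
    x1 t = 2 ^ (-Int.fract √(Real.logb 2 t)) := by
  rw [x1, if_pos ht, natCast_floor_eq_intCast_floor (Real.sqrt_nonneg _), ← Int.self_sub_floor,
    neg_sub]

/-- `lim_{t→∞} (Mx)(t) = 1/(2 log 2)`. -/
theorem Mop_x1_tendsto :
    Filter.Tendsto (Mop x1) Filter.atTop (nhds (1 / (2 * Real.log 2))) := by
  have hcont : Continuous fun u : ℝ => (2 : ℝ) ^ (-u) :=
    (Real.continuous_const_rpow two_ne_zero).comp continuous_neg
  have mean_eq : ∫ u in (0 : ℝ)..1, (2 : ℝ) ^ (-u) = 1 / (2 * Real.log 2) := by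
    rw [integral_const_rpow_neg two_pos (by norm_num), neg_zero, Real.rpow_zero, Real.rpow_neg_one]
    field_simp
    norm_num
  rw [← mean_eq]
  refine (tendsto_Mop_comp_fract_sqrt_logb one_lt_two (hcont.intervalIntegrable 0 1)).congr' ?_
  filter_upwards [eventually_ge_atTop 1] with t ht
  exact Mop_congr (fun s hs => (x1_eq_rpow_neg_fract hs).symm) ht
end
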